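/- Let μ be a compactly supported Borel probability measure on ℝ and let (Q_n)_{n≥0}, (q_n)_{n≥0} be defined from μ as in the context. Fix t ≥ 1, let D ∈ ℝ^{t×t} be strictly lower triangular, and set B := Σ_{i=1}^{t} q_i·D^{i−1} (with D^0 := I_t). Then: (a) for every λ ∈ ℝ, (I_t − λ·D + B·D)·(Σ_{i=1}^{t} Q_i(λ)·D^{i−1}) = λ·I_t − B, and hence (I_t − λ·D + B·D)^{−1}·(λ·I_t − B) = Σ_{i=1}^{t} Q_i(λ)·D^{i−1}; (b) ∫ Q_n(λ) dμ(λ) = 0 for every n ≥ 1, so that ∫ (I_t − λ·D + B·D)^{−1}·(λ·I_t − B) dμ(λ) = 0 entrywise. -/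

import Mathlib

open MeasureTheory

/-!
The recursion says that the generating function `∑ Qₙ(λ) zⁿ` is the inverse of the power series
`1 - λ z + b(z) z`, where `b(z) = ∑ qᵢ₊₁ zⁱ`. Removing the constant term `1` and dividing by `z`
gives `(1 - λ z + b(z) z) ∑ Qᵢ₊₁(λ) zⁱ = λ - b(z)`. Since `D ^ t = 0`, substituting `D` for `z` is
an algebra homomorphism on power series, which turns these two identities into the invertibility
of `1 - λ D + B D` and into part (a). The number `qₙ₊₁` is exactly what makes the integral of
`Qₙ₊₁` vanish once the integrals of `Q₁, …, Qₙ` do, and integrating the formula of part (a) gives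
part (b).
-/

open Finset (range)
open Finset.HasAntidiagonal (antidiagonal)
open Polynomial (aeval)
open PowerSeries (C X trunc)
open scoped Polynomial PowerSeries

section ConvolutionRecurrence

/-- The recurrence defining the polynomials `Qₙ`, over an arbitrary commutative ring so that it
covers both the polynomials (`x` the indeterminate) and their values (`x` a number). The index of
the coefficients is shifted: `b i` stands for `qᵢ₊₁`. -/
structure IsConvolutionRecurrence {R : Type*} [CommRing R] (x : R) (b a : ℕ → R) : Prop where
  zero : a 0 = 1
  succ : ∀ n, a (n + 1) = x * a n - ∑ p ∈ antidiagonal n, b p.1 * a p.2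

namespace IsConvolutionRecurrence

variable {R S : Type*} [CommRing R] [CommRing S] {x : R} {b a : ℕ → R}

theorem map (h : IsConvolutionRecurrence x b a) (f : R →+* S) :
    IsConvolutionRecurrence (f x) (fun n => f (b n)) (fun n => f (a n)) where
  zero := by rw [h.zero, map_one]
  succ n := by simp only [h.succ, map_sub, map_mul, map_sum]

theorem mul_mk_eq_one (h : IsConvolutionRecurrence x b a) :
    (1 - C x * X + PowerSeries.mk b * X) * PowerSeries.mk a = 1 := by
  have expand : (1 - C x * X + PowerSeries.mk b * X) * PowerSeries.mk a
      = PowerSeries.mk a - C x * PowerSeries.mk a * X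
        + PowerSeries.mk b * PowerSeries.mk a * X := by ring
  rw [expand]
  ext (_ | n)
  · simp [h.zero]
  · rw [map_add, map_sub, PowerSeries.coeff_succ_mul_X, PowerSeries.coeff_succ_mul_X,
      PowerSeries.coeff_C_mul, PowerSeries.coeff_mul]
    simp [PowerSeries.coeff_one, h.succ]

theorem mul_mk_succ (h : IsConvolutionRecurrence x b a) :
    (1 - C x * X + PowerSeries.mk b * X) * PowerSeries.mk (fun n => a (n + 1))
      = C x - PowerSeries.mk b := by
  have split : PowerSeries.mk a = PowerSeries.mk (fun n => a (n + 1)) * X + 1 := by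
    ext (_ | n) <;> simp [h.zero, PowerSeries.coeff_succ_mul_X, PowerSeries.coeff_one]
  have inverse := h.mul_mk_eq_one
  rw [split] at inverse
  apply PowerSeries.mul_X_cancel
  linear_combination inverse

theorem apply_succ_eq_zero {A : Type*} [CommRing A] [Algebra R A] {y : A} {q : ℕ → R} {Q : ℕ → A}
    (h : IsConvolutionRecurrence y (fun n => algebraMap R A (q n)) Q) (L : A →ₗ[R] R)
    (hL : L 1 = 1) (hq : ∀ n, q n = L (y * Q n)) (n : ℕ) : L (Q (n + 1)) = 0 := by
  induction n using Nat.strong_induction_on with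
  | _ n ih =>
    have last_term : ∑ p ∈ antidiagonal n, q p.1 * L (Q p.2) = q n * L (Q 0) := by
      refine Finset.sum_eq_single (n, 0) ?_ (by simp)
      rintro ⟨i, _ | j⟩ hij hne
      · simp_all
      · rw [Finset.HasAntidiagonal.mem_antidiagonal] at hij
        rw [ih j (by omega), mul_zero]
    calc L (Q (n + 1)) = L (y * Q n) - ∑ p ∈ antidiagonal n, q p.1 * L (Q p.2) := by
          simp only [h.succ, ← Algebra.smul_def, map_sub, map_sum, map_smul, smul_eq_mul]
      _ = 0 := by rw [last_term, h.zero, hL, mul_one, hq, sub_self]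

end IsConvolutionRecurrence

theorem sum_Icc_one_succ_eq_sum_antidiagonal {M : Type*} [AddCommMonoid M] (f : ℕ → ℕ → M) (n : ℕ) :
    ∑ i ∈ Finset.Icc 1 (n + 1), f i (n + 1 - i) = ∑ p ∈ antidiagonal n, f (p.1 + 1) p.2 := by
  rw [Finset.Nat.sum_antidiagonal_eq_sum_range_succ (fun i j => f (i + 1) j),
    ← Finset.Ico_add_one_right_eq_Icc, Finset.sum_Ico_eq_sum_range]
  simp [add_comm 1, Nat.add_sub_add_right]

theorem isConvolutionRecurrence_of_sum_Icc {R : Type*} [CommRing R] {x : R} {b a : ℕ → R}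
    (zero : a 0 = 1)
    (succ : ∀ n, 1 ≤ n → a n = x * a (n - 1) - ∑ i ∈ Finset.Icc 1 n, b i * a (n - i)) :
    IsConvolutionRecurrence x (fun n => b (n + 1)) a where
  zero := zero
  succ n := by
    rw [succ (n + 1) n.succ_pos, Nat.add_sub_cancel,
      sum_Icc_one_succ_eq_sum_antidiagonal (fun i j => b i * a j)]

end ConvolutionRecurrence

section NilpotentEval

variable {R A : Type*} [CommRing R] [Ring A] [Algebra R A] {D : A} {t : ℕ}

theorem aeval_trunc_coe (hD : D ^ t = 0) (p : R[X]) :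
    aeval D (trunc t (p : R⟦X⟧)) = aeval D p := by
  have X_pow_dvd : Polynomial.X ^ t ∣ trunc t (p : R⟦X⟧) - p := by
    rw [Polynomial.X_pow_dvd_iff]
    intro d hd
    simp [PowerSeries.coeff_trunc, hd]
  obtain ⟨r, hr⟩ := X_pow_dvd
  rw [← sub_eq_zero, ← map_sub, hr, map_mul, map_pow, Polynomial.aeval_X, hD, zero_mul]

/-- Substitution of an element `D` with `D ^ t = 0` for the variable of a power series, computed by
evaluating the truncation at degree `t`. -/
noncomputable def nilpotentEval (hD : D ^ t = 0) : R⟦X⟧ →ₐ[R] A :=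
  AlgHom.ofLinearMap ((aeval D).toLinearMap ∘ₗ trunc t)
    (by simpa using aeval_trunc_coe hD (1 : R[X]))
    (fun f g => by
      have h := aeval_trunc_coe hD (trunc t f * trunc t g)
      rwa [Polynomial.coe_mul, PowerSeries.trunc_trunc_mul_trunc, map_mul (aeval D)] at h)

theorem nilpotentEval_coe (hD : D ^ t = 0) (p : R[X]) :
    nilpotentEval hD (p : R⟦X⟧) = aeval D p :=
  aeval_trunc_coe hD p

theorem nilpotentEval_X (hD : D ^ t = 0) : nilpotentEval hD (X : R⟦X⟧) = D := by
  rw [← Polynomial.coe_X, nilpotentEval_coe, Polynomial.aeval_X]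

theorem nilpotentEval_C (hD : D ^ t = 0) (r : R) :
    nilpotentEval hD (C r) = r • (1 : A) := by
  rw [← Polynomial.coe_C, nilpotentEval_coe, Polynomial.aeval_C, Algebra.algebraMap_eq_smul_one]

theorem nilpotentEval_mk (hD : D ^ t = 0) (c : ℕ → R) :
    nilpotentEval hD (PowerSeries.mk c) = ∑ i ∈ range t, c i • D ^ i := by
  change (trunc t (PowerSeries.mk c)).eval₂ (algebraMap R A) D = _
  simp only [PowerSeries.eval₂_trunc_eq_sum_range, PowerSeries.coeff_mk, Algebra.smul_def]

theorem nilpotentEval_one_sub_add (hD : D ^ t = 0) (x : R) (b : ℕ → R) :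
    nilpotentEval hD (1 - C x * X + PowerSeries.mk b * X)
      = 1 - x • D + (∑ i ∈ range t, b i • D ^ i) * D := by
  simp only [map_add, map_sub, map_mul, map_one, nilpotentEval_X, nilpotentEval_C,
    nilpotentEval_mk, smul_mul_assoc, one_mul]

namespace IsConvolutionRecurrence

variable {x : R} {b a : ℕ → R}

theorem isUnit_one_sub_add (h : IsConvolutionRecurrence x b a) (hD : D ^ t = 0) :
    IsUnit (1 - x • D + (∑ i ∈ range t, b i • D ^ i) * D) := by
  rw [← nilpotentEval_one_sub_add hD]
  exact (IsUnit.of_mul_eq_one _ h.mul_mk_eq_one).map (nilpotentEval hD)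

theorem one_sub_add_mul_sum (h : IsConvolutionRecurrence x b a) (hD : D ^ t = 0) :
    (1 - x • D + (∑ i ∈ range t, b i • D ^ i) * D) * ∑ i ∈ range t, a (i + 1) • D ^ i
      = x • 1 - ∑ i ∈ range t, b i • D ^ i := by
  rw [← nilpotentEval_one_sub_add hD, ← nilpotentEval_mk hD (fun n => a (n + 1)), ← map_mul,
    h.mul_mk_succ, map_sub, nilpotentEval_C, nilpotentEval_mk]

end IsConvolutionRecurrence

end NilpotentEval

theorem pow_card_eq_zero_of_strictlyLowerTriangular {R n : Type*} [CommRing R] [Fintype n]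
    [LinearOrder n] {D : Matrix n n R} (hD : ∀ i j, i ≤ j → D i j = 0) :
    D ^ Fintype.card n = 0 := by
  have upper : D.transpose.IsUpperTriangular := fun i j hij => hD j i (le_of_lt hij)
  have charpoly_eq : D.charpoly = Polynomial.X ^ Fintype.card n := by
    rw [← Matrix.charpoly_transpose, Matrix.charpoly_of_isUpperTriangular _ upper]
    simp [hD]
  simpa [charpoly_eq] using Matrix.aeval_self_charpoly D

section Integration

theorem integrable_of_continuous_of_measure_compl_eq_zero {α E : Type*} [TopologicalSpace α]
    [T2Space α] [MeasurableSpace α] [OpensMeasurableSpace α] [NormedAddCommGroup E]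
    {μ : Measure α} [IsFiniteMeasureOnCompacts μ] {K : Set α} (hK : IsCompact K) (hKc : μ Kᶜ = 0)
    {f : α → E} (hf : Continuous f) : Integrable f μ := by
  rw [← Measure.restrict_eq_self_of_ae_mem (mem_ae_iff.2 hKc)]
  exact hf.continuousOn.integrableOn_compact hK

variable {μ : Measure ℝ}

theorem integrable_eval_of_integrable_pow (hμ : ∀ n : ℕ, Integrable (fun x => x ^ n) μ)
    (p : ℝ[X]) : Integrable (fun x => p.eval x) μ := by
  simp only [Polynomial.eval_eq_sum_range]
  exact integrable_finsetSum _ fun n _ => (hμ n).const_mul _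

/-- Integration of polynomials against a measure with finite moments, as a linear functional. -/
noncomputable def momentFunctional (hμ : ∀ n : ℕ, Integrable (fun x => x ^ n) μ) :
    ℝ[X] →ₗ[ℝ] ℝ where
  toFun p := ∫ x, p.eval x ∂μ
  map_add' p q := by
    simp only [Polynomial.eval_add]
    exact integral_add (integrable_eval_of_integrable_pow hμ p)
      (integrable_eval_of_integrable_pow hμ q)
  map_smul' c p := by
    simp only [Polynomial.eval_smul, smul_eq_mul, integral_const_mul, RingHom.id_apply]

theorem momentFunctional_one [IsProbabilityMeasure μ]
    (hμ : ∀ n : ℕ, Integrable (fun x => x ^ n) μ) : momentFunctional hμ 1 = 1 := by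
  simp [momentFunctional]

theorem integral_sum_smul_apply_eq_zero {α κ m n : Type*} [MeasurableSpace α]
    {ν : Measure α} {s : Finset κ} {f : κ → α → ℝ} (hf : ∀ k ∈ s, ∫ x, f k x ∂ν = 0)
    (hfi : ∀ k ∈ s, Integrable (f k) ν) (M : κ → Matrix m n ℝ) (i : m) (j : n) :
    ∫ x, (∑ k ∈ s, f k x • M k) i j ∂ν = 0 := by
  simp only [Matrix.sum_apply, Matrix.smul_apply, smul_eq_mul]
  rw [integral_finsetSum _ fun k hk => (hfi k hk).mul_const _]
  exact Finset.sum_eq_zero fun k hk => by rw [integral_mul_const, hf k hk, zero_mul]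

end Integration

theorem stmt9_general (μ : Measure ℝ) [IsProbabilityMeasure μ]
    (hμ : ∀ n : ℕ, Integrable (fun x => x ^ n) μ)
    (Q : ℕ → ℝ[X]) (q : ℕ → ℝ) (hQ0 : Q 0 = 1)
    (hq : ∀ n : ℕ, 1 ≤ n → q n = ∫ x, x * (Q (n - 1)).eval x ∂μ)
    (hQrec : ∀ n : ℕ, 1 ≤ n →
      Q n = Polynomial.X * Q (n - 1) - ∑ i ∈ Finset.Icc 1 n, Polynomial.C (q i) * Q (n - i))
    {ι : Type*} [Fintype ι] [DecidableEq ι] (t : ℕ) (D : Matrix ι ι ℝ) (hD : D ^ t = 0)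
    (B : Matrix ι ι ℝ) (hB : B = ∑ i ∈ range t, q (i + 1) • D ^ i) :
    (∀ x : ℝ, (1 - x • D + B * D) * (∑ i ∈ range t, (Q (i + 1)).eval x • D ^ i)
      = x • (1 : Matrix ι ι ℝ) - B) ∧
    (∀ x : ℝ, (1 - x • D + B * D)⁻¹ * (x • (1 : Matrix ι ι ℝ) - B)
      = ∑ i ∈ range t, (Q (i + 1)).eval x • D ^ i) ∧
    (∀ n : ℕ, 1 ≤ n → ∫ x, (Q n).eval x ∂μ = 0) ∧
    (∀ i j : ι, ∫ x, ((1 - x • D + B * D)⁻¹ * (x • (1 : Matrix ι ι ℝ) - B)) i j ∂μ = 0) := by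
  have recurrence := isConvolutionRecurrence_of_sum_Icc hQ0 hQrec
  have recurrence_eval (x : ℝ) :
      IsConvolutionRecurrence x (fun n => q (n + 1)) (fun n => (Q n).eval x) := by
    simpa using recurrence.map (Polynomial.evalRingHom x)
  have product (x : ℝ) : (1 - x • D + B * D) * (∑ i ∈ range t, (Q (i + 1)).eval x • D ^ i)
      = x • (1 : Matrix ι ι ℝ) - B := hB ▸ (recurrence_eval x).one_sub_add_mul_sum hD
  have inverse (x : ℝ) : (1 - x • D + B * D)⁻¹ * (x • (1 : Matrix ι ι ℝ) - B)
      = ∑ i ∈ range t, (Q (i + 1)).eval x • D ^ i := by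
    have unit : IsUnit (1 - x • D + B * D) := hB ▸ (recurrence_eval x).isUnit_one_sub_add hD
    rw [← product, Matrix.nonsing_inv_mul_cancel_left _ _ ((Matrix.isUnit_iff_isUnit_det _).1 unit)]
  have integral_succ (n : ℕ) : ∫ x, (Q (n + 1)).eval x ∂μ = 0 :=
    recurrence.apply_succ_eq_zero (momentFunctional hμ) (momentFunctional_one hμ)
      (fun n => by simpa [momentFunctional] using hq (n + 1) n.succ_pos) n
  refine ⟨product, inverse, fun n hn => ?_, fun i j => ?_⟩
  · simpa only [Nat.sub_add_cancel hn] using integral_succ (n - 1)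
  · simp only [inverse]
    exact integral_sum_smul_apply_eq_zero (fun k _ => integral_succ k)
      (fun k _ => integrable_eval_of_integrable_pow hμ _) _ i j

theorem stmt9 (μ : Measure ℝ) [IsProbabilityMeasure μ]
    (K : Set ℝ) (hK : IsCompact K) (hKc : μ Kᶜ = 0)
    (Q : ℕ → Polynomial ℝ) (q : ℕ → ℝ)
    (hQ0 : Q 0 = 1) (hq0 : q 0 = 1)
    (hq : ∀ n : ℕ, 1 ≤ n → q n = ∫ x, x * (Q (n - 1)).eval x ∂μ)
    (hQrec : ∀ n : ℕ, 1 ≤ n →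
      Q n = Polynomial.X * Q (n - 1) - ∑ i ∈ Finset.Icc 1 n, Polynomial.C (q i) * Q (n - i))
    (t : ℕ) (ht : 1 ≤ t)
    (D : Matrix (Fin t) (Fin t) ℝ)
    (hD : ∀ i j : Fin t, i ≤ j → D i j = 0)
    (B : Matrix (Fin t) (Fin t) ℝ)
    (hB : B = ∑ i ∈ Finset.range t, q (i + 1) • D ^ i) :
    (∀ x : ℝ,
        ((1 : Matrix (Fin t) (Fin t) ℝ) - x • D + B * D) *
            (∑ i ∈ Finset.range t, (Q (i + 1)).eval x • D ^ i) =
          x • (1 : Matrix (Fin t) (Fin t) ℝ) - B) ∧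
    (∀ x : ℝ,
        ((1 : Matrix (Fin t) (Fin t) ℝ) - x • D + B * D)⁻¹ *
            (x • (1 : Matrix (Fin t) (Fin t) ℝ) - B) =
          ∑ i ∈ Finset.range t, (Q (i + 1)).eval x • D ^ i) ∧
    (∀ n : ℕ, 1 ≤ n → (∫ x, (Q n).eval x ∂μ) = 0) ∧
    (∀ i j : Fin t,
        (∫ x, (((1 : Matrix (Fin t) (Fin t) ℝ) - x • D + B * D)⁻¹ *
            (x • (1 : Matrix (Fin t) (Fin t) ℝ) - B)) i j ∂μ) = 0) :=
  stmt9_general μ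
    (fun n => integrable_of_continuous_of_measure_compl_eq_zero hK hKc (continuous_pow n)) Q q hQ0
    hq hQrec t D (by simpa using pow_card_eq_zero_of_strictlyLowerTriangular hD) B hB
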